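/- If G is a K_{1,r}-free graph (r ≥ 3) with maximum degree Δ, then mp(G) ≥ ⌈Δ/(r−1)⌉ + 1. -/

import Mathlib

/-!
The proof goes through a proper colouring of `G` with at most `mp G` colours, as in the
Gallai–Roy theorem. Order the vertices linearly, first by degree and then by an arbitrary
tie-break, and colour `v` by the number of vertices `height G v` on a longest walk that starts
at `v` and strictly descends in this order. Such a walk is a degree-monotone path, so the colours
lie in `{1, …, mp G}` (`height_mem`), and prolonging a walk by a higher neighbour shows that the
colouring is proper (`height_ne`).

Take `v` of degree `Δ`. Its neighbours avoid the colour of `v`, so they use at most `mp G - 1`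
colours, and each colour class among them is an independent set of neighbours of `v`, hence has
at most `r - 1` elements. Thus `Δ ≤ (mp G - 1) (r - 1)`.
-/

open SimpleGraph

/-- Degree of a vertex (as `ncard` of the neighbor set, avoiding decidability). -/
noncomputable def gdeg {V : Type*} (G : SimpleGraph V) (v : V) : ℕ := (G.neighborSet v).ncard

/-- A walk is degree-monotone if the degrees along its support are monotone. -/
def DegMonotone {V : Type*} (G : SimpleGraph V) {u v : V} (p : G.Walk u v) : Prop :=
  List.Chain' (· ≤ ·) (p.support.map (gdeg G)) ∨
  List.Chain' (fun a b => b ≤ a) (p.support.map (gdeg G))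

/-- `mp G`: the maximum number of vertices on a degree-monotone path of `G`. -/
noncomputable def mp {V : Type*} [Fintype V] (G : SimpleGraph V) : ℕ :=
  sSup {n | ∃ (u v : V) (p : G.Walk u v), p.IsPath ∧ DegMonotone G p ∧ p.support.length = n}

/-- Sort key of a vertex: its degree, with ties broken by an arbitrary enumeration of `V`.
The induced linear order on vertices refines the comparison of degrees. -/
noncomputable def degKey {V : Type*} [Fintype V] (G : SimpleGraph V) (v : V) :
    ℕ ×ₗ Fin (Fintype.card V) := toLex (gdeg G v, Fintype.equivFin V v)

lemma degKey_injective {V : Type*} [Fintype V] (G : SimpleGraph V) :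
    Function.Injective (degKey G) := by
  intro a b h
  have h2 := congrArg (fun x => (ofLex x).2) h
  exact (Fintype.equivFin V).injective h2

lemma gdeg_le_of_degKey_lt {V : Type*} [Fintype V] (G : SimpleGraph V) {a b : V}
    (h : degKey G b < degKey G a) : gdeg G b ≤ gdeg G a := by
  rcases Prod.Lex.toLex_lt_toLex.1 h with h | h
  · exact h.le
  · exact h.1.le

/-- A walk along which the sort key strictly decreases. -/
def KeyDesc {V : Type*} [Fintype V] (G : SimpleGraph V) {u v : V} (p : G.Walk u v) : Prop :=
  p.support.IsChain (fun a b => degKey G b < degKey G a)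

lemma KeyDesc.isPath {V : Type*} [Fintype V] {G : SimpleGraph V} {u v : V} {p : G.Walk u v}
    (h : KeyDesc G p) : p.IsPath := by
  have : IsTrans V (fun a b => degKey G b < degKey G a) := ⟨fun _ _ _ h1 h2 => h2.trans h1⟩
  rw [SimpleGraph.Walk.isPath_def]
  exact (List.isChain_iff_pairwise.1 h).imp fun h1 h2 => by simp [h2] at h1

lemma KeyDesc.degMonotone {V : Type*} [Fintype V] {G : SimpleGraph V} {u v : V}
    {p : G.Walk u v} (h : KeyDesc G p) : DegMonotone G p := by
  right
  refine (List.isChain_map _).2 (List.IsChain.imp ?_ h)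
  exact fun a b => gdeg_le_of_degKey_lt G

lemma support_length_le_card {V : Type*} [Fintype V] {G : SimpleGraph V} {u v : V}
    {p : G.Walk u v} (h : p.IsPath) : p.support.length ≤ Fintype.card V :=
  List.Nodup.length_le_card h.support_nodup

/-- The number of vertices on a longest key-descending walk starting at `v`. -/
noncomputable def height {V : Type*} [Fintype V] (G : SimpleGraph V) (v : V) : ℕ :=
  sSup {n | ∃ (u : V) (p : G.Walk v u), KeyDesc G p ∧ p.support.length = n}

lemma bddAbove_height {V : Type*} [Fintype V] (G : SimpleGraph V) (v : V) :
    BddAbove {n | ∃ (u : V) (p : G.Walk v u), KeyDesc G p ∧ p.support.length = n} := by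
  refine ⟨Fintype.card V, ?_⟩
  rintro n ⟨u, p, hp, rfl⟩
  exact support_length_le_card hp.isPath

lemma exists_height {V : Type*} [Fintype V] (G : SimpleGraph V) (v : V) :
    ∃ (u : V) (p : G.Walk v u), KeyDesc G p ∧ p.support.length = height G v :=
  Nat.sSup_mem (s := {n | ∃ (u : V) (p : G.Walk v u), KeyDesc G p ∧ p.support.length = n})
    ⟨1, v, .nil, by simp [KeyDesc], by simp⟩ (bddAbove_height G v)

lemma height_mem {V : Type*} [Fintype V] (G : SimpleGraph V) (v : V) :
    height G v ∈ Finset.Icc 1 (mp G) := by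
  obtain ⟨u, p, hp, hl⟩ := exists_height G v
  refine Finset.mem_Icc.2 ⟨by rw [← hl]; simp, ?_⟩
  refine le_csSup ⟨Fintype.card V, ?_⟩ ⟨v, u, p, hp.isPath, hp.degMonotone, hl⟩
  rintro n ⟨a, b, q, hq, -, rfl⟩
  exact support_length_le_card hq

lemma height_lt {V : Type*} [Fintype V] (G : SimpleGraph V) {a b : V} (hab : G.Adj a b)
    (h : degKey G b < degKey G a) : height G b < height G a := by
  obtain ⟨u, p, hp, hl⟩ := exists_height G b
  refine Nat.lt_of_succ_le (le_csSup (bddAbove_height G a) ⟨u, .cons hab p, ?_, by simp [← hl]⟩)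
  unfold KeyDesc at hp ⊢
  rw [SimpleGraph.Walk.support_cons]
  rw [← SimpleGraph.Walk.cons_tail_support] at hp ⊢
  exact List.isChain_cons_cons.2 ⟨h, hp⟩

lemma height_ne {V : Type*} [Fintype V] (G : SimpleGraph V) {a b : V} (hab : G.Adj a b) :
    height G a ≠ height G b := by
  rcases lt_trichotomy (degKey G a) (degKey G b) with h | h | h
  · exact (height_lt G hab.symm h).ne
  · exact absurd (degKey_injective G h) hab.ne
  · exact (height_lt G hab h).ne'

/-- If `G` is `K_{1,r}`-free (`r ≥ 3`), i.e. no vertex has `r` pairwise nonadjacent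
neighbours, and `Δ` is the maximum degree, then `mp(G) ≥ ⌈Δ/(r−1)⌉ + 1`. -/
theorem mp_ge_of_starFree {V : Type*} [Fintype V] (G : SimpleGraph V) (r : ℕ) (hr : 3 ≤ r)
    (hfree : ∀ (v : V) (s : Finset V), (∀ x ∈ s, G.Adj v x) →
      (∀ x ∈ s, ∀ y ∈ s, x ≠ y → ¬ G.Adj x y) → s.card < r)
    (Δ : ℕ) (hΔ : ∀ v, gdeg G v ≤ Δ) (hΔ' : ∃ v, gdeg G v = Δ) :
    (⌈(Δ : ℚ) / ((r : ℚ) - 1)⌉ + 1 : ℤ) ≤ (mp G : ℤ) := by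
  classical
  obtain ⟨v, hv⟩ := hΔ'
  have hm := height_mem G v
  have hcard : (G.neighborFinset v).card ≤
      (r - 1) * ((Finset.Icc 1 (mp G)).erase (height G v)).card := by
    refine Finset.card_le_mul_card_image_of_maps_to (f := height G) ?_ _ ?_
    · intro w hw
      rw [SimpleGraph.mem_neighborFinset] at hw
      exact Finset.mem_erase.2 ⟨(height_ne G hw).symm, height_mem G w⟩
    · intro c _
      refine Nat.le_sub_one_of_lt (hfree v _ ?_ ?_)
      · intro x hx
        simpa using (Finset.mem_filter.1 hx).1
      · intro x hx y hy _ hxy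
        exact height_ne G hxy ((Finset.mem_filter.1 hx).2.trans (Finset.mem_filter.1 hy).2.symm)
  have hdeg : (G.neighborFinset v).card = Δ := by
    rw [← hv, gdeg, Set.ncard_eq_toFinset_card', SimpleGraph.neighborFinset]
  rw [hdeg, Finset.card_erase_of_mem hm, Nat.card_Icc, Nat.add_sub_cancel] at hcard
  have h1 : 1 ≤ mp G := (Finset.mem_Icc.1 hm).1.trans (Finset.mem_Icc.1 hm).2
  have hr0 : (0 : ℚ) < (r : ℚ) - 1 := by
    have : (3 : ℚ) ≤ r := by exact_mod_cast hr
    linarith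
  have hq : (Δ : ℚ) ≤ ((r : ℚ) - 1) * ((mp G : ℚ) - 1) := by
    have h : (Δ : ℚ) ≤ (((r - 1) * (mp G - 1) : ℕ) : ℚ) := by exact_mod_cast hcard
    rwa [Nat.cast_mul, Nat.cast_sub (by omega), Nat.cast_sub h1, Nat.cast_one] at h
  have : ⌈(Δ : ℚ) / ((r : ℚ) - 1)⌉ ≤ (mp G : ℤ) - 1 := by
    rw [Int.ceil_le, div_le_iff₀ hr0]
    push_cast
    linarith
  linarith
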